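/- Let g : G_ℤ → ℤ be the group homomorphism defined by g(X_k) = 1 + |k| and g(Y_k) = −1 − |k|. Then |g(r)| ≤ 1 for every element r of the form ±(X_k + Y_k), ±(X_k + Y_{k+1}), ±(X_{k+1} − X_k) or ±(Y_{k+1} − Y_k) with k ∈ ℤ. Consequently, since HN(D_n) = n·X_n + n·X_{−n} + (2n−1)·X_{−1} + (4n−1)·Y_0 satisfies g(HN(D_n)) = 2n² + 2n − 1, and since each framed Reidemeister move changes HN by an element of this form while HN of the trivial diagram is 0, any sequence of framed Reidemeister moves unknotting D_n has length at least 2n² + 2n − 1. -/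

import Mathlib

/-!
The Hass–Nowik lower bound for framed unknotting of `Dₙ` (Section 3.2 of the
paper): with `g : G_ℤ → ℤ` the homomorphism `g(X_k) = 1 + |k|`,
`g(Y_k) = −1 − |k|`, every element of the set `R` of possible changes of `HN` under
framed Reidemeister moves satisfies `|g(r)| ≤ 1`; since
`HN(Dₙ) = n·X_n + n·X_{−n} + (2n−1)·X_{−1} + (4n−1)·Y_0` gives
`g(HN(Dₙ)) = 2n² + 2n − 1` and `HN` of the trivial diagram is `0`, any sequence of
framed Reidemeister moves unknotting `Dₙ` has length at least `2n² + 2n − 1`.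

Knot diagrams are axiomatized by the combinatorial data relevant to `HN`.  A framed
unknotting sequence is a sequence of diagrams ending at the trivial (crossingless)
diagram, each step changing `HN` by an element of `R` (the changes of `HN` under
framed Reidemeister moves).
-/

/-- Combinatorial data of an oriented knot diagram relevant to the Hass–Nowik
invariant. -/
structure HNDiagram where
  Crossing : Type
  [fintypeCrossing : Fintype Crossing]
  sgn : Crossing → ℤ
  sgn_unit : ∀ c, sgn c = 1 ∨ sgn c = -1
  /-- the linking number `lk(D^c)` of the smoothing at `c` -/
  lk : Crossing → ℤ

attribute [instance] HNDiagram.fintypeCrossing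

/-- The free abelian group `G_ℤ` with basis `{X_k, Y_k : k ∈ ℤ}`. -/
abbrev GZ : Type := (ℤ ⊕ ℤ) →₀ ℤ

/-- The basis element `X_k` of `G_ℤ`. -/
noncomputable def X (k : ℤ) : GZ := Finsupp.single (Sum.inl k) 1

/-- The basis element `Y_k` of `G_ℤ`. -/
noncomputable def Y (k : ℤ) : GZ := Finsupp.single (Sum.inr k) 1

/-- The Hass–Nowik invariant
`HN(D) = ∑_{c positive} X_{lk(D^c)} + ∑_{c negative} Y_{lk(D^c)}`. -/
noncomputable def HN (D : HNDiagram) : GZ :=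
  ∑ c, if D.sgn c = 1 then X (D.lk c) else Y (D.lk c)

/-- The set `R` of the possible changes of `HN` under framed Reidemeister moves:
`±(X_k + Y_k)`, `±(X_k + Y_{k+1})`, `±(X_{k+1} − X_k)`, `±(Y_{k+1} − Y_k)` for
`k ∈ ℤ`. -/
def Rset : Set GZ :=
  {r | ∃ k : ℤ,
    r = X k + Y k ∨ r = -(X k + Y k) ∨
    r = X k + Y (k + 1) ∨ r = -(X k + Y (k + 1)) ∨
    r = X (k + 1) - X k ∨ r = -(X (k + 1) - X k) ∨
    r = Y (k + 1) - Y k ∨ r = -(Y (k + 1) - Y k)}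

section OrderedGroup

variable {A : Type*} [AddCommGroup A] [LinearOrder A] [IsOrderedAddMonoid A]

theorem abs_last_sub_zero_le_nsmul {m : ℕ} {f : Fin (m + 1) → A} {c : A}
    (hf : ∀ i : Fin m, |f i.succ - f i.castSucc| ≤ c) :
    |f (Fin.last m) - f 0| ≤ m • c := by
  cases m with
  | zero => simp
  | succ m =>
    rw [← Fin.succ_last, ← Fin.sum_Iic_sub (Fin.last m) f]
    calc |∑ i ∈ Finset.Iic (Fin.last m), (f i.succ - f i.castSucc)|
        ≤ ∑ i ∈ Finset.Iic (Fin.last m), |f i.succ - f i.castSucc| :=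
          Finset.abs_sum_le_sum_abs _ _
      _ ≤ (Finset.Iic (Fin.last m)).card • c := Finset.sum_le_card_nsmul _ _ c fun i _ ↦ hf i
      _ = (m + 1) • c := by rw [Fin.card_Iic, Fin.val_last]

/-- Up to sign, `g` maps each element of `Rset` to `0` or to an increment of `k ↦ g (X k)`. -/
theorem abs_map_le_of_mem_Rset {g : GZ →+ A} {c : A} (hY : ∀ k, g (Y k) = -g (X k))
    (hX : ∀ k, |g (X (k + 1)) - g (X k)| ≤ c) {r : GZ} (hr : r ∈ Rset) : |g r| ≤ c := by
  obtain ⟨k, hr⟩ := hr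
  have hc : 0 ≤ c := (abs_nonneg _).trans (hX k)
  have h_cancel : |g (X k + Y k)| ≤ c := by simpa [hY] using hc
  have h_mixed : |g (X k + Y (k + 1))| ≤ c := by
    simpa [hY, ← sub_eq_add_neg, abs_sub_comm] using hX k
  have h_X : |g (X (k + 1) - X k)| ≤ c := by simpa using hX k
  have h_Y : |g (Y (k + 1) - Y k)| ≤ c := by
    simpa [hY, neg_add_eq_sub, abs_sub_comm] using hX k
  rcases hr with rfl | rfl | rfl | rfl | rfl | rfl | rfl | rfl <;>
    simpa only [map_neg, abs_neg]

theorem abs_map_HN_last_sub_le_nsmul {g : GZ →+ A} {c : A} (hg : ∀ r ∈ Rset, |g r| ≤ c)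
    {m : ℕ} {Ds : Fin (m + 1) → HNDiagram}
    (hDs : ∀ i : Fin m, HN (Ds i.succ) - HN (Ds i.castSucc) ∈ Rset) :
    |g (HN (Ds (Fin.last m))) - g (HN (Ds 0))| ≤ m • c :=
  abs_last_sub_zero_le_nsmul (f := fun i ↦ g (HN (Ds i))) fun i ↦ by
    simpa only [map_sub] using hg _ (hDs i)

end OrderedGroup

theorem HN_of_isEmpty (D : HNDiagram) [IsEmpty D.Crossing] : HN D = 0 :=
  Finset.sum_of_isEmpty _

/-- Let `g : G_ℤ → ℤ` be the homomorphism with `g(X_k) = 1 + |k|` and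
`g(Y_k) = −1 − |k|`.  Then `|g(r)| ≤ 1` for every `r ∈ R`.  Consequently, for every
`n ≥ 1` and every diagram `Dₙ` with
`HN(Dₙ) = n·X_n + n·X_{−n} + (2n−1)·X_{−1} + (4n−1)·Y_0` we have
`g(HN(Dₙ)) = 2n² + 2n − 1`, and any sequence of framed Reidemeister moves (each of
which changes `HN` by an element of `R`) transforming `Dₙ` into the trivial
(crossingless) diagram has length at least `2n² + 2n − 1`. -/
theorem hass_nowik_framed_lower_bound
    (g : GZ →+ ℤ)
    (hgX : ∀ k : ℤ, g (X k) = 1 + |k|)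
    (hgY : ∀ k : ℤ, g (Y k) = -1 - |k|) :
    (∀ r ∈ Rset, |g r| ≤ 1) ∧
    (∀ (Dn : HNDiagram) (n : ℕ), 1 ≤ n →
      HN Dn = (n : ℤ) • X (n : ℤ) + (n : ℤ) • X (-(n : ℤ)) +
        (2 * (n : ℤ) - 1) • X (-1) + (4 * (n : ℤ) - 1) • Y 0 →
      g (HN Dn) = 2 * (n : ℤ) ^ 2 + 2 * n - 1 ∧
      (∀ (m : ℕ) (Ds : Fin (m + 1) → HNDiagram),
        Ds 0 = Dn → IsEmpty (Ds (Fin.last m)).Crossing →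
        (∀ i : Fin m, HN (Ds i.succ) - HN (Ds i.castSucc) ∈ Rset) →
        2 * (n : ℤ) ^ 2 + 2 * n - 1 ≤ m)) := by
  have h_antisymm (k : ℤ) : g (Y k) = -g (X k) := by rw [hgX, hgY, neg_add']
  have h_increment (k : ℤ) : |g (X (k + 1)) - g (X k)| ≤ 1 := by
    simpa [hgX] using abs_abs_sub_abs_le (k + 1) k
  have hR : ∀ r ∈ Rset, |g r| ≤ 1 := fun r hr ↦
    abs_map_le_of_mem_Rset h_antisymm h_increment hr
  refine ⟨hR, fun Dn n _ hDn ↦ ?_⟩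
  have h_value : g (HN Dn) = 2 * (n : ℤ) ^ 2 + 2 * n - 1 := by
    simp only [hDn, map_add, map_zsmul, hgX, hgY, smul_eq_mul, abs_neg, Nat.abs_cast, abs_one,
      abs_zero]
    ring
  refine ⟨h_value, fun m Ds h_start h_trivial h_moves ↦ ?_⟩
  calc 2 * (n : ℤ) ^ 2 + 2 * n - 1
      = g (HN (Ds 0)) := by rw [h_start, h_value]
    _ ≤ |g (HN (Ds (Fin.last m))) - g (HN (Ds 0))| := by
        rw [HN_of_isEmpty (Ds (Fin.last m)), map_zero, zero_sub, abs_neg]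
        exact le_abs_self _
    _ ≤ m • 1 := abs_map_HN_last_sub_le_nsmul hR h_moves
    _ = m := by rw [nsmul_one]
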